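/- Let μ be a compactly supported Borel probability measure on ℝ and let (Q_n)_{n≥0}, (q_n)_{n≥0} be defined from μ as in the context. Define the doubly-indexed sequence (c_{k,j})_{k,j≥0} of real numbers recursively by c_{0,0} = 1, c_{0,j} = 0 for j ≥ 1, and c_{k,j} = Σ_{m=0}^{j+1} c_{k−1,m}·q_{j+1−m} for k ≥ 1 and j ≥ 0. Then c_{k,j} = ∫ λ^k·Q_j(λ) dμ(λ) for all k, j ≥ 0. -/

import Mathlib

open MeasureTheory

/-!
Since `q 0 = 1`, the recursion for `Q` says that multiplication by `X` acts on the `Q j` through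
the coefficients `q`: `X * Q j = ∑ m ≤ j + 1, q (j + 1 - m) Q m`. Hence for every linear functional
`L` the array `L (X ^ k * Q j)` obeys the recursion defining `c`. The choice
`q (n + 1) = L (X * Q n)` is exactly what makes the initial row agree as well: given `L (Q 0) = 1`,
it forces `L (Q j) = 0` for `j ≥ 1`.
-/

open Polynomial

theorem X_mul_eq_sum_of_recursion {R : Type*} [CommRing R] {Q : ℕ → R[X]} {q : ℕ → R}
    (hq0 : q 0 = 1)
    (hQrec : ∀ n : ℕ, 1 ≤ n → Q n = X * Q (n - 1) - ∑ i ∈ Finset.Icc 1 n, C (q i) * Q (n - i))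
    (j : ℕ) : X * Q j = ∑ m ∈ Finset.range (j + 2), C (q (j + 1 - m)) * Q m := by
  calc X * Q j
      = ∑ i ∈ Finset.Icc 1 (j + 1), C (q i) * Q (j + 1 - i) + Q (j + 1) := by
        rw [hQrec (j + 1) j.succ_pos, Nat.add_sub_cancel, add_sub_cancel]
    _ = ∑ i ∈ Finset.range (j + 2), C (q i) * Q (j + 1 - i) := by
        rw [Finset.sum_range_succ', hq0, C_1, one_mul, Nat.sub_zero, Finset.range_eq_Ico,
          Finset.sum_Ico_add' (fun i => C (q i) * Q (j + 1 - i)), zero_add,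
          Finset.Ico_add_one_right_eq_Icc]
    _ = ∑ m ∈ Finset.range (j + 2), C (q (j + 1 - m)) * Q m := by
        rw [← Finset.Nat.sum_antidiagonal_eq_sum_range_succ (fun a b => C (q a) * Q b),
          ← Finset.Nat.sum_antidiagonal_swap,
          ← Finset.Nat.sum_antidiagonal_eq_sum_range_succ (fun a b => C (q b) * Q a)]
        rfl

theorem map_X_pow_succ_mul_eq_sum {R ι : Type*} [CommSemiring R] (L : R[X] →ₗ[R] R)
    {s : Finset ι} {a : ι → R} {P : ι → R[X]} {p : R[X]} (hp : X * p = ∑ m ∈ s, C (a m) * P m)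
    (k : ℕ) : L (X ^ (k + 1) * p) = ∑ m ∈ s, L (X ^ k * P m) * a m := by
  rw [pow_succ, mul_assoc, hp, Finset.mul_sum, map_sum]
  refine Finset.sum_congr rfl fun m _ => ?_
  rw [mul_left_comm, ← smul_eq_C_mul, map_smul, smul_eq_mul, mul_comm]

theorem map_succ_eq_zero_of_X_mul_eq_sum {R : Type*} [CommRing R] (L : R[X] →ₗ[R] R)
    {Q : ℕ → R[X]} {q : ℕ → R} (hLQ0 : L (Q 0) = 1) (hq0 : q 0 = 1)
    (hq : ∀ n, q (n + 1) = L (X * Q n))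
    (hX : ∀ j, X * Q j = ∑ m ∈ Finset.range (j + 2), C (q (j + 1 - m)) * Q m) (n : ℕ) :
    L (Q (n + 1)) = 0 := by
  induction n using Nat.strong_induction_on with
  | _ n ih =>
    have inner_terms_vanish :
        ∑ m ∈ Finset.range n, L (Q (m + 1)) * q (n + 1 - (m + 1)) = 0 :=
      Finset.sum_eq_zero fun m hm => by rw [ih m (Finset.mem_range.mp hm), zero_mul]
    have expansion : q (n + 1) = q (n + 1) + L (Q (n + 1)) := by
      calc q (n + 1) = ∑ m ∈ Finset.range (n + 2), L (Q m) * q (n + 1 - m) := by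
            simpa only [zero_add, pow_one, pow_zero, one_mul, ← hq]
              using map_X_pow_succ_mul_eq_sum L (hX n) 0
        _ = q (n + 1) + L (Q (n + 1)) := by
            rw [Finset.sum_range_succ, Finset.sum_range_succ', inner_terms_vanish, hLQ0,
              Nat.sub_self, hq0, Nat.sub_zero, zero_add, one_mul, mul_one]
    exact left_eq_add.mp expansion

theorem stmt5_general {R : Type*} [CommRing R] (L : R[X] →ₗ[R] R) (Q : ℕ → R[X]) (q : ℕ → R)
    (hLQ0 : L (Q 0) = 1) (hq0 : q 0 = 1)
    (hq : ∀ n : ℕ, 1 ≤ n → q n = L (X * Q (n - 1)))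
    (hQrec : ∀ n : ℕ, 1 ≤ n → Q n = X * Q (n - 1) - ∑ i ∈ Finset.Icc 1 n, C (q i) * Q (n - i))
    (c : ℕ → ℕ → R) (hc00 : c 0 0 = 1) (hc0j : ∀ j : ℕ, 1 ≤ j → c 0 j = 0)
    (hcrec : ∀ k : ℕ, 1 ≤ k → ∀ j : ℕ,
      c k j = ∑ m ∈ Finset.range (j + 2), c (k - 1) m * q (j + 1 - m)) (k j : ℕ) :
    c k j = L (X ^ k * Q j) := by
  have hX := X_mul_eq_sum_of_recursion hq0 hQrec
  induction k generalizing j with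
  | zero =>
    rw [pow_zero, one_mul]
    cases j with
    | zero => rw [hc00, hLQ0]
    | succ n =>
      rw [hc0j _ n.succ_pos,
        map_succ_eq_zero_of_X_mul_eq_sum L hLQ0 hq0 (fun n => hq (n + 1) n.succ_pos) hX]
  | succ k ih =>
    rw [hcrec (k + 1) k.succ_pos, map_X_pow_succ_mul_eq_sum L (hX j)]
    simp only [Nat.add_sub_cancel, ih]

theorem integrable_of_continuous_of_measure_compl_eq_zero {α E : Type*} [TopologicalSpace α]
    [T2Space α] [MeasurableSpace α] [OpensMeasurableSpace α] [NormedAddCommGroup E]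
    {μ : Measure α} [IsFiniteMeasureOnCompacts μ] {K : Set α} (hK : IsCompact K)
    (hKc : μ Kᶜ = 0) {f : α → E} (hf : Continuous f) : Integrable f μ := by
  rw [← Measure.restrict_eq_self_of_ae_mem (mem_ae_iff.mpr hKc)]
  exact hf.continuousOn.integrableOn_compact hK

/-- The functional `p ↦ ∫ p dμ` on polynomials, for a measure `μ` with finite moments of all
orders. -/
noncomputable def momentFunctional (μ : Measure ℝ)
    (hμ : ∀ p : ℝ[X], Integrable (fun x => p.eval x) μ) : ℝ[X] →ₗ[ℝ] ℝ where
  toFun p := ∫ x, p.eval x ∂μ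
  map_add' p r := by simp only [eval_add, integral_add (hμ p) (hμ r)]
  map_smul' a p := by simp only [eval_smul, integral_smul, RingHom.id_apply]

theorem momentFunctional_apply {μ : Measure ℝ}
    (hμ : ∀ p : ℝ[X], Integrable (fun x => p.eval x) μ) (p : ℝ[X]) :
    momentFunctional μ hμ p = ∫ x, p.eval x ∂μ :=
  rfl

theorem stmt5 (μ : Measure ℝ) [IsProbabilityMeasure μ]
    (K : Set ℝ) (hK : IsCompact K) (hKc : μ Kᶜ = 0)
    (Q : ℕ → Polynomial ℝ) (q : ℕ → ℝ)
    (hQ0 : Q 0 = 1) (hq0 : q 0 = 1)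
    (hq : ∀ n : ℕ, 1 ≤ n → q n = ∫ x, x * (Q (n - 1)).eval x ∂μ)
    (hQrec : ∀ n : ℕ, 1 ≤ n →
      Q n = Polynomial.X * Q (n - 1) - ∑ i ∈ Finset.Icc 1 n, Polynomial.C (q i) * Q (n - i))
    (c : ℕ → ℕ → ℝ)
    (hc00 : c 0 0 = 1)
    (hc0j : ∀ j : ℕ, 1 ≤ j → c 0 j = 0)
    (hcrec : ∀ k : ℕ, 1 ≤ k → ∀ j : ℕ,
      c k j = ∑ m ∈ Finset.range (j + 2), c (k - 1) m * q (j + 1 - m)) :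
    ∀ k j : ℕ, c k j = ∫ x, x ^ k * (Q j).eval x ∂μ := by
  have hμ (p : ℝ[X]) : Integrable (fun x => p.eval x) μ :=
    integrable_of_continuous_of_measure_compl_eq_zero hK hKc p.continuous
  simpa [momentFunctional_apply] using stmt5_general (momentFunctional μ hμ) Q q
    (by simp [momentFunctional_apply, hQ0]) hq0 (by simpa [momentFunctional_apply] using hq)
    hQrec c hc00 hc0j hcrec
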